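/- Let n ≥ 0, 0 < β < ρ < 1, λ := ρ − β, α ∈ ℝ, and 0 < ε ≤ e^{−α² · max(0, β/(2λ) − 1/2)}. Let u ∈ ℝ^{n+1} be a unit vector. Then for all measurable functions f, g : ℝ^{n+1} → [0,1], setting h := f − g, one has ∫_{ℝ^{n+1}} h(x) T_ρh(x) dγ_{n+1}(x) − ε (∫_{ℝ^{n+1}} h(x) Φ((β⟨x,u⟩ − α)/√(1−β²)) dγ_{n+1}(x))² ≥ 0. Equivalently, the functional f ↦ ∫ f T_ρf dγ_{n+1} − ε (∫ f(x) Φ((β⟨x,u⟩ − α)/√(1−β²)) dγ_{n+1}(x))² is convex on the set of measurable functions f : ℝ^{n+1} → [0,1]. -/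

import Mathlib

/-!
Write `w(x) = Φ((β⟨x,u⟩ - α)/√(1-β²))` for the penalty weight. Then `w = T_β 1_A` with
`A = {x | α < ⟨x,u⟩}`. Put `r = √ρ` and `c = β/√ρ`; both have square at most `1`, because
`β < ρ < 1`. The semigroup property and self-adjointness give
`⟨h, T_ρ h⟩ = ‖T_r h‖²` and `⟨h, w⟩ = ⟨h, T_{rc} 1_A⟩ = ⟨T_r h, T_c 1_A⟩`.
Since `0 ≤ T_c 1_A ≤ 1`, Cauchy–Schwarz yields `⟨h, w⟩² ≤ ⟨h, T_ρ h⟩`, which suffices because the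
bound on `ε` forces `ε ≤ 1`.

The identity `⟨F, T_{rc} G⟩ = ⟨T_r F, T_c G⟩` (`integral_mul_ouOp`) expresses that two Gaussian
vectors with correlation `rc` can be realised as noisy copies of a common standard Gaussian
vector, of correlations `r` and `c` with it (`map_common_factor`); this equality of laws is
checked on characteristic functions.
-/

open MeasureTheory Real Set Filter
open scoped RealInnerProductSpace ENNReal

noncomputable section

/-- `ℝ^k` with the Euclidean structure. -/
abbrev Euc (k : ℕ) : Type := EuclideanSpace ℝ (Fin k)

/-- Standard Gaussian density on `ℝ^k`. -/
def gaussDensity (k : ℕ) (x : Euc k) : ℝ :=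
  (2 * π) ^ (-(k : ℝ) / 2) * Real.exp (-‖x‖ ^ 2 / 2)

/-- Standard Gaussian measure on `ℝ^k`. -/
def gaussMeasure (k : ℕ) : Measure (Euc k) :=
  volume.withDensity fun x => ENNReal.ofReal (gaussDensity k x)

/-- Ornstein–Uhlenbeck operator with correlation `ρ`. -/
def ouOp (k : ℕ) (ρ : ℝ) (f : Euc k → ℝ) (x : Euc k) : ℝ :=
  ∫ y, f (ρ • x + Real.sqrt (1 - ρ ^ 2) • y) ∂(gaussMeasure k)

/-- Noise stability of a set with correlation `ρ`. -/
def noiseStability (k : ℕ) (ρ : ℝ) (Ω : Set (Euc k)) : ℝ :=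
  ∫ x, Ω.indicator (fun _ => (1 : ℝ)) x * ouOp k ρ (Ω.indicator fun _ => (1 : ℝ)) x
    ∂(gaussMeasure k)

/-- A half space: `{x : ⟨x,u⟩ > t}` for a unit vector `u`. -/
def IsHalfSpace (k : ℕ) (H : Set (Euc k)) : Prop :=
  ∃ (u : Euc k) (t : ℝ), ‖u‖ = 1 ∧ H = {x | t < ⟪x, u⟫}

/-- The standard Gaussian cumulative distribution function. -/
def Phi (t : ℝ) : ℝ := ∫ s in Iio t, (2 * π) ^ (-(1 : ℝ) / 2) * Real.exp (-s ^ 2 / 2)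

/-- The Gaussian barycenter of `Ω ⊆ ℝ^k`. -/
def bary (k : ℕ) (Ω : Set (Euc k)) : Euc k := ∫ x in Ω, x ∂(gaussMeasure k)

/-- The density definition of the standard Gaussian measure agrees with Mathlib's `stdGaussian`:
both have characteristic function `exp (-‖t‖² / 2)`. -/
lemma gaussMeasure_eq_stdGaussian (k : ℕ) :
    gaussMeasure k = ProbabilityTheory.stdGaussian (Euc k) := by
  have hb : 0 < ((1 / 2 : ℂ)).re := by norm_num
  have hd0 : ∀ x : Euc k, 0 ≤ gaussDensity k x := fun x => by unfold gaussDensity; positivity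
  have hdc : Continuous (gaussDensity k) := by unfold gaussDensity; fun_prop
  have hint : Integrable (gaussDensity k) volume := by
    have h := GaussianFourier.integrable_cexp_neg_mul_sq_norm_add (V := Euc k) hb 0 0
    refine (h.norm.const_mul ((2 * π) ^ (-(k : ℝ) / 2))).congr (ae_of_all _ fun x => ?_)
    simp only [gaussDensity, Complex.norm_exp]
    congr 2
    simp [← Complex.ofReal_pow]
    ring
  have : IsFiniteMeasure (gaussMeasure k) :=
    isFiniteMeasure_withDensity_ofReal hint.hasFiniteIntegral
  apply Measure.ext_of_charFun
  ext t
  rw [ProbabilityTheory.charFun_stdGaussian, charFun_apply, gaussMeasure,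
    integral_withDensity_eq_integral_toReal_smul (by fun_prop) (ae_of_all _ fun x => by simp)]
  have h := GaussianFourier.integral_cexp_neg_mul_sq_norm_add (V := Euc k) hb Complex.I t
  have e : ∀ x : Euc k, (ENNReal.ofReal (gaussDensity k x)).toReal •
      Complex.exp (⟪x, t⟫ * Complex.I) = (((2 * π) ^ (-(k : ℝ) / 2) : ℝ) : ℂ) *
        Complex.exp (-(1 / 2 : ℂ) * ‖x‖ ^ 2 + Complex.I * ⟪t, x⟫) := by
    intro x
    rw [ENNReal.toReal_ofReal (hd0 x), gaussDensity, Complex.exp_add, real_inner_comm x t,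
      Complex.real_smul]
    push_cast
    rw [mul_assoc]
    congr 2
    · congr 1
      ring
    · congr 1
      ring
  simp_rw [e]
  rw [integral_const_mul, h, ← mul_assoc]
  have e2 : (((2 * π) ^ (-(k : ℝ) / 2) : ℝ) : ℂ) *
      ((π : ℂ) / (1 / 2)) ^ ((Module.finrank ℝ (Euc k) : ℂ) / 2) = 1 := by
    have e3 : ((π : ℂ) / (1 / 2)) = ((2 * π : ℝ) : ℂ) := by push_cast; ring
    have e4 : ((Module.finrank ℝ (Euc k) : ℂ) / 2) = (((k : ℝ) / 2 : ℝ) : ℂ) := by simp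
    rw [e3, e4, ← Complex.ofReal_cpow (by positivity), ← Complex.ofReal_mul,
      ← Real.rpow_add (by positivity)]
    simp [neg_div]
  rw [e2, one_mul, Complex.I_sq]
  congr 1
  ring

instance (k : ℕ) : IsProbabilityMeasure (gaussMeasure k) := by
  rw [gaussMeasure_eq_stdGaussian]; infer_instance

/-- If `Z, W₁, W₂` are independent standard Gaussians, then
`(r Z + s W₁, c Z + d W₂)` has the law of `(X, r c X + e W)` with `X, W` independent standard
Gaussians, as soon as `r² + s² = c² + d² = (rc)² + e² = 1`. -/
lemma map_common_factor (k : ℕ) {r s c d e : ℝ} (h1 : r ^ 2 + s ^ 2 = 1) (h2 : c ^ 2 + d ^ 2 = 1)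
    (h3 : (r * c) ^ 2 + e ^ 2 = 1) :
    ((gaussMeasure k).prod ((gaussMeasure k).prod (gaussMeasure k))).map
        (fun p => (r • p.1 + s • p.2.1, c • p.1 + d • p.2.2)) =
      ((gaussMeasure k).prod (gaussMeasure k)).map
        (fun p => (p.1, (r * c) • p.1 + e • p.2)) := by
  let M : (Euc k × Euc k × Euc k) →L[ℝ] (Euc k × Euc k) :=
    ContinuousLinearMap.prod
      (r • ContinuousLinearMap.fst ℝ _ _ + s • (ContinuousLinearMap.fst ℝ _ _).comp
        (ContinuousLinearMap.snd ℝ _ _))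
      (c • ContinuousLinearMap.fst ℝ _ _ + d • (ContinuousLinearMap.snd ℝ _ _).comp
        (ContinuousLinearMap.snd ℝ _ _))
  let N : (Euc k × Euc k) →L[ℝ] (Euc k × Euc k) :=
    (ContinuousLinearMap.fst ℝ _ _).prod
      ((r * c) • ContinuousLinearMap.fst ℝ _ _ + e • ContinuousLinearMap.snd ℝ _ _)
  change Measure.map M _ = Measure.map N _
  have : IsFiniteMeasure (Measure.map M
    ((gaussMeasure k).prod ((gaussMeasure k).prod (gaussMeasure k)))) := by infer_instance
  apply Measure.ext_of_charFunDual
  ext L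
  set a := (InnerProductSpace.toDual ℝ (Euc k)).symm (L.comp (.inl ℝ _ _)) with ha
  set b := (InnerProductSpace.toDual ℝ (Euc k)).symm (L.comp (.inr ℝ _ _)) with hb
  have hL : ∀ x y, L (x, y) = ⟪a, x⟫ + ⟪b, y⟫ := by
    intro x y
    have : (x, y) = (x, 0) + (0, y) := by simp
    rw [this, map_add, ha, hb, InnerProductSpace.toDual_symm_apply,
      InnerProductSpace.toDual_symm_apply]
    simp
  have key : ∀ (l : StrongDual ℝ (Euc k)) (v : Euc k), (∀ x, l x = ⟪v, x⟫) →
      charFunDual (gaussMeasure k) l = Complex.exp (-‖v‖ ^ 2 / 2) := by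
    intro l v hl
    have : l = InnerProductSpace.toDual ℝ (Euc k) v := by
      ext x; simp [hl]
    rw [gaussMeasure_eq_stdGaussian, ProbabilityTheory.charFunDual_stdGaussian, this,
      LinearIsometryEquiv.norm_map]
  rw [charFunDual_map, charFunDual_map, charFunDual_prod, charFunDual_prod, charFunDual_prod,
    key _ (r • a + c • b), key _ (s • a), key _ (d • b), key _ (a + (r * c) • b), key _ (e • b),
    ← Complex.exp_add, ← Complex.exp_add, ← Complex.exp_add]
  · congr 1
    have : ‖r • a + c • b‖ ^ 2 + (‖s • a‖ ^ 2 + ‖d • b‖ ^ 2) =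
        ‖a + (r * c) • b‖ ^ 2 + ‖e • b‖ ^ 2 := by
      rw [norm_add_sq_real, norm_add_sq_real]
      simp only [norm_smul, mul_pow, Real.norm_eq_abs, sq_abs, real_inner_smul_left,
        real_inner_smul_right]
      linear_combination ‖a‖ ^ 2 * h1 + ‖b‖ ^ 2 * h2 - ‖b‖ ^ 2 * h3
    have := congrArg (fun z : ℝ => (z : ℂ)) this
    push_cast at this
    linear_combination (-1 / 2) * this
  all_goals
    intro x
    simp [M, N, hL, inner_add_left, real_inner_smul_left, real_inner_smul_right]

lemma abs_ouOp_le (k : ℕ) (r : ℝ) {F : Euc k → ℝ} (hF : ∀ x, |F x| ≤ 1) (x : Euc k) :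
    |ouOp k r F x| ≤ 1 := by
  simpa [ouOp] using norm_integral_le_of_norm_le_const (μ := gaussMeasure k)
    (f := fun y => F (r • x + √(1 - r ^ 2) • y)) (C := 1) (ae_of_all _ fun y => hF _)

lemma measurable_ouOp (k : ℕ) (r : ℝ) {F : Euc k → ℝ} (hF : Measurable F) :
    Measurable (ouOp k r F) := by
  have : StronglyMeasurable
      (Function.uncurry fun (x y : Euc k) => F (r • x + √(1 - r ^ 2) • y)) :=
    (hF.comp (by fun_prop)).stronglyMeasurable
  exact this.integral_prod_right.measurable

/-- The semigroup property and the symmetry of the Ornstein–Uhlenbeck operators in one identity: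
`⟨F, T_{rc} G⟩ = ⟨T_r F, T_c G⟩`. -/
lemma integral_mul_ouOp (k : ℕ) {r c : ℝ} (hr : r ^ 2 ≤ 1) (hc : c ^ 2 ≤ 1) {F G : Euc k → ℝ}
    (hF : Measurable F) (hG : Measurable G) (hF1 : ∀ x, |F x| ≤ 1) (hG1 : ∀ x, |G x| ≤ 1) :
    ∫ x, F x * ouOp k (r * c) G x ∂(gaussMeasure k) =
      ∫ x, ouOp k r F x * ouOp k c G x ∂(gaussMeasure k) := by
  have hrc : (r * c) ^ 2 ≤ 1 := by rw [mul_pow]; exact mul_le_one₀ hr (sq_nonneg _) hc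
  have h1 : r ^ 2 + √(1 - r ^ 2) ^ 2 = 1 := by rw [Real.sq_sqrt (by linarith)]; ring
  have h2 : c ^ 2 + √(1 - c ^ 2) ^ 2 = 1 := by rw [Real.sq_sqrt (by linarith)]; ring
  have h3 : (r * c) ^ 2 + √(1 - (r * c) ^ 2) ^ 2 = 1 := by
    rw [Real.sq_sqrt (by linarith)]; ring
  have hH : Measurable fun p : Euc k × Euc k => F p.1 * G p.2 := by fun_prop
  have law := congrArg (fun μ => ∫ p, F p.1 * G p.2 ∂μ) (map_common_factor k h1 h2 h3)
  beta_reduce at law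
  have hb : ∀ x y, ‖F x * G y‖ ≤ 1 := fun x y => by
    rw [norm_mul]; exact mul_le_one₀ (hF1 x) (norm_nonneg _) (hG1 y)
  rw [integral_map (by fun_prop) hH.aestronglyMeasurable,
    integral_map (by fun_prop) hH.aestronglyMeasurable, integral_prod, integral_prod] at law
  rotate_left
  · exact Integrable.of_bound (hH.comp (by fun_prop)).aestronglyMeasurable 1
      (ae_of_all _ fun p => hb _ _)
  · exact Integrable.of_bound (hH.comp (by fun_prop)).aestronglyMeasurable 1
      (ae_of_all _ fun p => hb _ _)
  simp only [integral_const_mul] at law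
  refine law.symm.trans (integral_congr_ae (ae_of_all _ fun z => ?_))
  exact integral_prod_mul (μ := gaussMeasure k) (ν := gaussMeasure k)
    (fun w => F (r • z + √(1 - r ^ 2) • w)) (fun w => G (c • z + √(1 - c ^ 2) • w))

lemma gaussianReal_Iio (t : ℝ) : (ProbabilityTheory.gaussianReal 0 1).real (Iio t) = Phi t := by
  rw [Measure.real, ProbabilityTheory.gaussianReal_apply_eq_integral _ one_ne_zero,
    ENNReal.toReal_ofReal
      (integral_nonneg fun x => ProbabilityTheory.gaussianPDFReal_nonneg _ _ _), Phi]
  congr 1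
  ext s
  rw [ProbabilityTheory.gaussianPDFReal, neg_div 2 (1 : ℝ), Real.rpow_neg (by positivity),
    Real.sqrt_eq_rpow]
  simp

lemma map_inner_gaussMeasure (k : ℕ) {u : Euc k} (hu : ‖u‖ = 1) :
    (gaussMeasure k).map (fun y => ⟪u, y⟫) = ProbabilityTheory.gaussianReal 0 1 := by
  have h := (ProbabilityTheory.IsGaussian.map_eq_gaussianReal
    (μ := ProbabilityTheory.stdGaussian (Euc k)) (innerSL ℝ u))
  rw [ProbabilityTheory.integral_strongDual_stdGaussian,
    ProbabilityTheory.variance_dual_stdGaussian, innerSL_apply_norm, hu] at h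
  rw [gaussMeasure_eq_stdGaussian]
  simpa using h

/-- Applying `T_β` to the indicator of the half space `{α < ⟨x, u⟩}` yields the penalty weight. -/
lemma ouOp_halfSpace (k : ℕ) {β : ℝ} (hβ : β ^ 2 < 1) (α : ℝ) {u : Euc k} (hu : ‖u‖ = 1)
    (x : Euc k) :
    ouOp k β ({x | α < ⟪x, u⟫}.indicator fun _ => (1 : ℝ)) x =
      Phi ((β * ⟪x, u⟫ - α) / √(1 - β ^ 2)) := by
  have hs : 0 < √(1 - β ^ 2) := Real.sqrt_pos.2 (by linarith)
  rw [← gaussianReal_Iio, ← map_inner_gaussMeasure k (u := -u) (by simpa using hu),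
    map_measureReal_apply (by fun_prop) measurableSet_Iio, ← integral_indicator_one
      (measurableSet_Iio.preimage (by fun_prop)), ouOp]
  refine integral_congr_ae (ae_of_all _ fun y => ?_)
  simp only [indicator, mem_ofPred_eq, mem_preimage, mem_Iio, Pi.one_apply]
  congr 1
  rw [lt_div_iff₀ hs, inner_add_left, real_inner_smul_left, real_inner_smul_left,
    inner_neg_left, real_inner_comm y u]
  apply propext
  constructor <;> intro h <;> linarith

/-- Cauchy–Schwarz on a probability space against a function bounded by `1`. -/
lemma sq_integral_mul_le {Ω : Type*} [MeasurableSpace Ω] (μ : Measure Ω) [IsProbabilityMeasure μ]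
    {p q : Ω → ℝ} (hp : Measurable p) (hq : Measurable q) (hp1 : ∀ x, |p x| ≤ 1)
    (hq1 : ∀ x, |q x| ≤ 1) : (∫ x, p x * q x ∂μ) ^ 2 ≤ ∫ x, p x * p x ∂μ := by
  have hb : ∀ {v w : Ω → ℝ}, Measurable v → Measurable w → (∀ x, |v x| ≤ 1) →
      (∀ x, |w x| ≤ 1) → Integrable (fun x => v x * w x) μ := fun hv hw hv1 hw1 =>
    Integrable.of_bound (hv.mul hw).aestronglyMeasurable 1 (ae_of_all _ fun x => by
      rw [norm_mul]; exact mul_le_one₀ (hv1 x) (norm_nonneg _) (hw1 x))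
  set m := ∫ x, p x * q x ∂μ with hm
  -- Integrate `2 m p q ≤ p² + m² q² ≤ p² + m²`.
  have h : ∫ x, 2 * m * (p x * q x) ∂μ ≤ ∫ x, (p x * p x + m ^ 2) ∂μ := by
    refine integral_mono ((hb hp hq hp1 hq1).const_mul _)
      ((hb hp hp hp1 hp1).add (integrable_const _)) fun x => ?_
    have : q x ^ 2 ≤ 1 := (sq_le_one_iff_abs_le_one _).2 (hq1 x)
    change 2 * m * (p x * q x) ≤ p x * p x + m ^ 2
    nlinarith [sq_nonneg (p x - m * q x), mul_le_mul_of_nonneg_left this (sq_nonneg m)]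
  rw [integral_const_mul, integral_add (hb hp hp hp1 hp1) (integrable_const _), ← hm] at h
  simp at h
  nlinarith

/-- The quadratic form defining Problem 2z is positive semidefinite: for `f, g` with values
in `[0,1]` and `h := f − g`, the noise-stability quadratic form minus the penalty term is
nonnegative; equivalently, the penalized noise-stability functional is convex. -/
theorem penalized_noise_stability_psd
    (n : ℕ) (ρ β α ε : ℝ)
    (hβ0 : 0 < β) (hβρ : β < ρ) (hρ1 : ρ < 1)
    (hε0 : 0 < ε)
    (hε : ε ≤ Real.exp (-α ^ 2 * max 0 (β / (2 * (ρ - β)) - 1 / 2)))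
    (u : Euc (n + 1)) (hu : ‖u‖ = 1)
    (f g : Euc (n + 1) → ℝ) (hf : Measurable f) (hg : Measurable g)
    (hf01 : ∀ x, f x ∈ Icc (0 : ℝ) 1) (hg01 : ∀ x, g x ∈ Icc (0 : ℝ) 1) :
    0 ≤ (∫ x, (f x - g x) * ouOp (n + 1) ρ (fun y => f y - g y) x ∂(gaussMeasure (n + 1)))
        - ε * (∫ x, (f x - g x) * Phi ((β * ⟪x, u⟫ - α) / Real.sqrt (1 - β ^ 2))
            ∂(gaussMeasure (n + 1))) ^ 2 := by
  have hρ0 : 0 < ρ := hβ0.trans hβρ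
  have hrpos : 0 < √ρ := Real.sqrt_pos.2 hρ0
  have hr2 : √ρ ^ 2 = ρ := Real.sq_sqrt hρ0.le
  have hr : √ρ ^ 2 ≤ 1 := by rw [hr2]; exact hρ1.le
  have hc : (β / √ρ) ^ 2 ≤ 1 := by
    rw [div_pow, hr2, div_le_one hρ0]; nlinarith
  have hβ2 : β ^ 2 < 1 := by nlinarith
  have hε1 : ε ≤ 1 := by
    refine hε.trans (Real.exp_le_one_iff.2 ?_)
    exact mul_nonpos_of_nonpos_of_nonneg (by nlinarith [sq_nonneg α]) (le_max_left _ _)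
  have hh : Measurable fun y => f y - g y := hf.sub hg
  have hh1 : ∀ x, |f x - g x| ≤ 1 := fun x => abs_le.2
    ⟨by linarith [(hf01 x).1, (hg01 x).2], by linarith [(hf01 x).2, (hg01 x).1]⟩
  set I : Euc (n + 1) → ℝ := {x | α < ⟪x, u⟫}.indicator fun _ => (1 : ℝ) with hI
  have hIm : Measurable I :=
    measurable_const.indicator (measurableSet_lt measurable_const (by fun_prop))
  have hI1 : ∀ x, |I x| ≤ 1 := fun x => by
    rw [hI, indicator_apply]; split_ifs <;> simp
  have e1 := integral_mul_ouOp (n + 1) hr hr hh hh hh1 hh1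
  have e2 := integral_mul_ouOp (n + 1) hr hc hh hIm hh1 hI1
  rw [Real.mul_self_sqrt hρ0.le] at e1
  rw [mul_div_cancel₀ _ hrpos.ne'] at e2
  simp_rw [hI, ouOp_halfSpace (n + 1) hβ2 α hu, ← hI] at e2
  have cs := sq_integral_mul_le (gaussMeasure (n + 1)) (measurable_ouOp (n + 1) (√ρ) hh)
    (measurable_ouOp (n + 1) (β / √ρ) hIm) (abs_ouOp_le _ _ hh1) (abs_ouOp_le _ _ hI1)
  rw [e1, e2]
  nlinarith [sq_nonneg (∫ x, ouOp (n + 1) (√ρ) (fun y => f y - g y) x *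
    ouOp (n + 1) (β / √ρ) I x ∂(gaussMeasure (n + 1)))]
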